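/- arXiv:1902.06669 — 3 statements merged into one kernel-verified Lean document; each statement's English description precedes it below -/
import Mathlib

section
/- Let ν, κ ≥ 0 with ν + κ > 0, ω ∈ ℝ with ω ≠ 0, k ∈ ℝ, γ ∈ (0, π/2), and let λ = iμ with μ ∈ ℝ be purely imaginary. Then the imaginary part of det A_{ν,κ,ω,k}(iμ) equals −ω(ν + κ)(k² + μ²)². In particular, if (k, μ) ≠ (0, 0), then det A_{ν,κ,ω,k}(iμ) ≠ 0, i.e. det A_{ν,κ,ω,k} has no purely imaginary roots other than possibly λ = 0 in the case k = 0. -/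
open Complex Matrix

/-- The matrix `A_{ν,κ,ω,k}(λ)` of the modal problem for the linear viscous
Boussinesq system in slope coordinates (Brunt–Väisälä frequency `N = 1`). -/
noncomputable def boussinesqModalMatrix (ν κ ω k γ : ℝ) (l : ℂ) : Matrix (Fin 4) (Fin 4) ℂ :=
  !![-I * (ω : ℂ) + (ν : ℂ) * ((k : ℂ) ^ 2 - l ^ 2), 0, -(Real.sin γ : ℂ), I * (k : ℂ);
     0, -I * (ω : ℂ) + (ν : ℂ) * ((k : ℂ) ^ 2 - l ^ 2), -(Real.cos γ : ℂ), -l;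
     (Real.sin γ : ℂ), (Real.cos γ : ℂ), -I * (ω : ℂ) + (κ : ℂ) * ((k : ℂ) ^ 2 - l ^ 2), 0;
     I * (k : ℂ), -l, 0, 0]

/-- Closed form of the modal determinant, for an arbitrary complex exponent `l`. -/
theorem det_boussinesqModalMatrix (ν κ ω k γ : ℝ) (l : ℂ) :
    (boussinesqModalMatrix ν κ ω k γ l).det =
      (-I * ω + ν * (k ^ 2 - l ^ 2)) * (-I * ω + κ * (k ^ 2 - l ^ 2)) * (k ^ 2 - l ^ 2)
        - (l * Real.sin γ + I * k * Real.cos γ) ^ 2 := by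
  simp only [boussinesqModalMatrix, det_succ_row_zero, Fin.sum_univ_succ]
  simp [Fin.succAbove]
  linear_combination
    (-(k : ℂ) ^ 2 * ((-I * ω + ν * (k ^ 2 - l ^ 2)) * (-I * ω + κ * (k ^ 2 - l ^ 2)))) * I_sq

/-- On the imaginary axis the modal determinant splits explicitly into real and imaginary parts. -/
theorem det_boussinesqModalMatrix_I_mul (ν κ ω k γ μ : ℝ) :
    (boussinesqModalMatrix ν κ ω k γ (I * μ)).det =
      (((ν * κ * (k ^ 2 + μ ^ 2) ^ 2 - ω ^ 2) * (k ^ 2 + μ ^ 2)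
          + (μ * Real.sin γ + k * Real.cos γ) ^ 2 : ℝ) : ℂ)
        + ((-ω * (ν + κ) * (k ^ 2 + μ ^ 2) ^ 2 : ℝ) : ℂ) * I := by
  have hs : (k : ℂ) ^ 2 - (I * μ) ^ 2 = k ^ 2 + μ ^ 2 := by
    rw [mul_pow, I_sq]; ring
  rw [det_boussinesqModalMatrix, hs]
  push_cast
  linear_combination
    ((ω : ℂ) ^ 2 * (k ^ 2 + μ ^ 2) - (μ * Complex.sin γ + k * Complex.cos γ) ^ 2) * I_sq

/-- **No purely imaginary roots of the modal determinant.**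
For `λ = iμ` purely imaginary, `Im (det A_{ν,κ,ω,k}(iμ)) = −ω(ν + κ)(k² + μ²)²`; in
particular `det A_{ν,κ,ω,k}(iμ) ≠ 0` as soon as `(k, μ) ≠ (0, 0)`. -/
theorem det_boussinesqModalMatrix_im_of_purely_imaginary
    (ν κ ω k γ μ : ℝ) (hν : 0 ≤ ν) (hκ : 0 ≤ κ) (hνκ : 0 < ν + κ) (hω : ω ≠ 0)
    (hγ : γ ∈ Set.Ioo 0 (Real.pi / 2)) :
    ((boussinesqModalMatrix ν κ ω k γ (I * (μ : ℂ))).det).im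
        = -ω * (ν + κ) * (k ^ 2 + μ ^ 2) ^ 2 ∧
      ((k, μ) ≠ (0, 0) →
        (boussinesqModalMatrix ν κ ω k γ (I * (μ : ℂ))).det ≠ 0) := by
  have him : ((boussinesqModalMatrix ν κ ω k γ (I * (μ : ℂ))).det).im
      = -ω * (ν + κ) * (k ^ 2 + μ ^ 2) ^ 2 := by
    rw [det_boussinesqModalMatrix_I_mul, add_im, ofReal_im, im_ofReal_mul, I_im, mul_one, zero_add]
  refine ⟨him, fun hkμ hdet => ?_⟩
  have hsum : k ^ 2 + μ ^ 2 ≠ 0 := by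
    intro h
    have hk : k = 0 := pow_eq_zero_iff two_ne_zero |>.mp (by linarith [sq_nonneg k, sq_nonneg μ])
    have hμ : μ = 0 := pow_eq_zero_iff two_ne_zero |>.mp (by linarith [sq_nonneg k, sq_nonneg μ])
    exact hkμ (by rw [hk, hμ])
  rw [hdet, zero_im] at him
  exact mul_ne_zero (mul_ne_zero (neg_ne_zero.mpr hω) hνκ.ne') (pow_ne_zero 2 hsum) him.symm
end

section
/- Let ν, κ ≥ 0, ω, k ∈ ℝ with k ≠ 0, γ ∈ (0, π/2), and λ ∈ ℂ with λ ≠ 0 and iω + κ(λ² − k²) ≠ 0. If det A_{ν,κ,ω,k}(λ) = 0, then the vector (U_λ, W_λ, B_λ, P_λ) with U_λ = 1, W_λ = ik/λ, B_λ = (sin γ + (ik/λ) cos γ)/(iω + κ(λ² − k²)), P_λ = (1/(ik))[iω + ν(λ² − k²) + sin γ · (sin γ + (ik/λ) cos γ)/(iω + κ(λ² − k²))] lies in the kernel of A_{ν,κ,ω,k}(λ). -/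
open Complex Matrix

/-- The determinant of a modal matrix with diagonal entries `-N`, `-N`, `-D`, `0`. -/
theorem det_modalMatrix {R : Type*} [CommRing R] (N D s c q l : R) :
    (!![-N, 0, -s, q; 0, -N, -c, -l; s, c, -D, 0; q, -l, 0, 0] : Matrix (Fin 4) (Fin 4) R).det =
      -(N * D * (q ^ 2 + l ^ 2) + (s * l + c * q) ^ 2) := by
  simp [Matrix.det_succ_row_zero, Fin.sum_univ_succ, Fin.succAbove]
  ring

/-- If a modal matrix is singular, then its kernel contains the vector obtained by normalizing
the first entry to `1` and solving the fourth, third and first equations in turn. -/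
theorem modalMatrix_mulVec_eq_zero {K : Type*} [Field K] {N D s c q l : K}
    (hD : D ≠ 0) (hq : q ≠ 0) (hl : l ≠ 0)
    (hdet : (!![-N, 0, -s, q; 0, -N, -c, -l; s, c, -D, 0; q, -l, 0, 0] :
      Matrix (Fin 4) (Fin 4) K).det = 0) :
    (!![-N, 0, -s, q; 0, -N, -c, -l; s, c, -D, 0; q, -l, 0, 0] :
      Matrix (Fin 4) (Fin 4) K).mulVec
      ![1, q / l, (s + q / l * c) / D, 1 / q * (N + s * ((s + q * l⁻¹ * c) / D))] = 0 := by
  rw [det_modalMatrix] at hdet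
  ext i
  fin_cases i <;> simp [Matrix.mulVec, dotProduct, Fin.sum_univ_succ] <;> field_simp
  · ring
  · linear_combination hdet
  · ring
  · ring

/-- **Explicit kernel vector of the modal matrix.**
If `det A_{ν,κ,ω,k}(λ) = 0` (with `k ≠ 0`, `λ ≠ 0`, `iω + κ(λ² − k²) ≠ 0`), then
`(U_λ, W_λ, B_λ, P_λ)` as displayed lies in the kernel of `A_{ν,κ,ω,k}(λ)`. -/
theorem boussinesqModalMatrix_mulVec_eigenvector
    (ν κ ω k γ : ℝ) (hν : 0 ≤ ν) (hκ : 0 ≤ κ) (hk : k ≠ 0)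
    (hγ : γ ∈ Set.Ioo 0 (Real.pi / 2)) (l : ℂ) (hl : l ≠ 0)
    (hden : I * (ω : ℂ) + (κ : ℂ) * (l ^ 2 - (k : ℂ) ^ 2) ≠ 0)
    (hdet : (boussinesqModalMatrix ν κ ω k γ l).det = 0) :
    (boussinesqModalMatrix ν κ ω k γ l).mulVec
      ![1,
        I * (k : ℂ) / l,
        ((Real.sin γ : ℂ) + (I * (k : ℂ) / l) * (Real.cos γ : ℂ)) /
          (I * (ω : ℂ) + (κ : ℂ) * (l ^ 2 - (k : ℂ) ^ 2)),
        (1 / (I * (k : ℂ))) *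
          (I * (ω : ℂ) + (ν : ℂ) * (l ^ 2 - (k : ℂ) ^ 2) +
            (Real.sin γ : ℂ) * (((Real.sin γ : ℂ) + I * (k : ℂ) * l⁻¹ * (Real.cos γ : ℂ)) /
              (I * (ω : ℂ) + (κ : ℂ) * (l ^ 2 - (k : ℂ) ^ 2))))] = 0 := by
  have hA : boussinesqModalMatrix ν κ ω k γ l =
      !![-(I * (ω : ℂ) + (ν : ℂ) * (l ^ 2 - (k : ℂ) ^ 2)), 0, -(Real.sin γ : ℂ), I * (k : ℂ);
        0, -(I * (ω : ℂ) + (ν : ℂ) * (l ^ 2 - (k : ℂ) ^ 2)), -(Real.cos γ : ℂ), -l;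
        (Real.sin γ : ℂ), (Real.cos γ : ℂ), -(I * (ω : ℂ) + (κ : ℂ) * (l ^ 2 - (k : ℂ) ^ 2)), 0;
        I * (k : ℂ), -l, 0, 0] := by
    have h (a : ℂ) : -I * (ω : ℂ) + a * ((k : ℂ) ^ 2 - l ^ 2) =
        -(I * (ω : ℂ) + a * (l ^ 2 - (k : ℂ) ^ 2)) := by ring
    rw [boussinesqModalMatrix, h, h]
  rw [hA] at hdet ⊢
  exact modalMatrix_mulVec_eq_zero hden (mul_ne_zero I_ne_zero (ofReal_ne_zero.mpr hk)) hl hdet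
end

section
/- Let γ ∈ (0, π/2), δ ≥ 0, ν₀, κ₀ > 0, ε > 0, T > 0. Let 𝒲 = (u, w, b) with pressure p, and 𝒲_a = (u_a, w_a, b_a) with pressure p_a, be smooth, spatially decaying vector fields on [0, T] × ℝ × [0, ∞), both divergence free (∂_x u + ∂_y w = 0, ∂_x u_a + ∂_y w_a = 0) and both satisfying the boundary conditions u = w = 0, ∂_y b = 0 and u_a = w_a = 0, ∂_y b_a = 0 at y = 0. Suppose 𝒲 solves exactly the system ∂_t u + δ(u∂_x + w∂_y)u − sin γ·b + ∂_x p = ν₀ε⁶Δu, ∂_t w + δ(u∂_x + w∂_y)w − cos γ·b + ∂_y p = ν₀ε⁶Δw, ∂_t b + δ(u∂_x + w∂_y)b + sin γ·u + cos γ·w = κ₀ε⁶Δb, while 𝒲_a solves the same system with an additional remainder R = (R_u, R_w, R_b) on the right-hand sides of the three evolution equations. Then for all t ∈ [0, T]: ‖(𝒲_a − 𝒲)(t)‖²_{L²(ℝ×(0,∞))} ≤ ( ‖(𝒲_a − 𝒲)(0)‖²_{L²} + ∫₀ᵗ ‖R(s)‖²_{L²} ds ) · exp( ∫₀ᵗ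 ( 2δ‖∇𝒲_a(s)‖_{L^∞(ℝ×(0,∞))} + 1 ) ds ). -/
open Real MeasureTheory Function

/-- Partial derivative in the tangential variable `x`. -/
noncomputable def pdx (f : ℝ × ℝ → ℝ) (q : ℝ × ℝ) : ℝ := fderiv ℝ f q (1, 0)

/-- Partial derivative in the normal variable `y`. -/
noncomputable def pdy (f : ℝ × ℝ → ℝ) (q : ℝ × ℝ) : ℝ := fderiv ℝ f q (0, 1)

/-- Laplacian in the spatial variables. -/
noncomputable def lap (f : ℝ × ℝ → ℝ) (q : ℝ × ℝ) : ℝ := pdx (pdx f) q + pdy (pdy f) q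

/-- Lebesgue measure restricted to the half-plane `{y > 0}`. -/
noncomputable def halfPlane : Measure (ℝ × ℝ) := volume.restrict {q : ℝ × ℝ | 0 < q.2}

/-- `f`, its first and second spatial derivatives and its first time derivative are
bounded on `[0, T]` by `C (1 + ‖q‖)⁻⁴`; this expresses smoothness with integrability
uniform in time and decay at spatial infinity. -/
def DecaysUniformly (T C : ℝ) (f : ℝ → ℝ × ℝ → ℝ) : Prop :=
  ∀ t ∈ Set.Icc 0 T, ∀ q : ℝ × ℝ,
    |f t q| ≤ C / (1 + ‖q‖) ^ 4 ∧
    ‖fderiv ℝ (f t) q‖ ≤ C / (1 + ‖q‖) ^ 4 ∧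
    ‖fderiv ℝ (fun q' => fderiv ℝ (f t) q') q‖ ≤ C / (1 + ‖q‖) ^ 4 ∧
    |deriv (fun s => f s q) t| ≤ C / (1 + ‖q‖) ^ 4

section QuarticDecay

variable {f g : ℝ × ℝ → ℝ}

/-- `f` is bounded by a multiple of `(1 + ‖q‖)⁻⁴`. -/
def QuarticDecay {F : Type*} [Norm F] (f : ℝ × ℝ → F) : Prop :=
  ∃ C : ℝ, ∀ q, ‖f q‖ ≤ C / (1 + ‖q‖) ^ 4

lemma nonneg_of_quartic_bound {F : Type*} [SeminormedAddGroup F] {f : ℝ × ℝ → F} {C : ℝ}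
    (h : ∀ q, ‖f q‖ ≤ C / (1 + ‖q‖) ^ 4) : 0 ≤ C := by
  have := (norm_nonneg _).trans (h 0)
  simpa using this

lemma div_one_add_norm_pow_le {C : ℝ} (hC : 0 ≤ C) (q : ℝ × ℝ) : C / (1 + ‖q‖) ^ 4 ≤ C :=
  div_le_self hC (one_le_pow₀ (by linarith [norm_nonneg q]))

lemma integrable_quartic {E : Type*} [NormedAddCommGroup E] [NormedSpace ℝ E]
    [FiniteDimensional ℝ E] [MeasurableSpace E] [BorelSpace E] (μ : Measure E)
    [μ.IsAddHaarMeasure] (hE : Module.finrank ℝ E < 4) (C : ℝ) :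
    Integrable (fun q : E => C / (1 + ‖q‖) ^ 4) μ := by
  have h := (integrable_one_add_norm (μ := μ) (E := E) (r := 4) (by exact_mod_cast hE)).const_mul C
  refine h.congr (Filter.Eventually.of_forall fun q => ?_)
  have : 0 ≤ 1 + ‖q‖ := by positivity
  simp only [div_eq_mul_inv]
  rw [Real.rpow_neg this]
  norm_cast

lemma integrable_quartic_halfPlane (C : ℝ) :
    Integrable (fun q : ℝ × ℝ => C / (1 + ‖q‖) ^ 4) halfPlane :=
  (integrable_quartic volume (by simp) C).restrict

lemma halfPlane_eq_prod :
    halfPlane = (volume : Measure ℝ).prod (volume.restrict (Set.Ioi 0)) := by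
  have h := Measure.prod_restrict (μ := (volume : Measure ℝ)) (ν := (volume : Measure ℝ))
    Set.univ (Set.Ioi 0)
  rw [Measure.restrict_univ] at h
  rw [h, halfPlane, Measure.volume_eq_prod]
  congr 1
  ext q
  simp

namespace QuarticDecay

lemma integrable (hf : QuarticDecay f) (hc : Continuous f) : Integrable f halfPlane := by
  obtain ⟨C, hC⟩ := hf
  exact (integrable_quartic_halfPlane C).mono' hc.aestronglyMeasurable
    (Filter.Eventually.of_forall hC)

lemma integrable_fst (hf : QuarticDecay f) (hc : Continuous f) (y : ℝ) :
    Integrable fun x => f (x, y) := by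
  obtain ⟨C, hC⟩ := hf
  have hC0 := nonneg_of_quartic_bound hC
  refine (integrable_quartic (volume : Measure ℝ) (by simp) C).mono'
    (by fun_prop : Continuous fun x => f (x, y)).aestronglyMeasurable
    (Filter.Eventually.of_forall fun x => (hC _).trans ?_)
  gcongr
  exact norm_fst_le (x, y)

lemma integrable_snd (hf : QuarticDecay f) (hc : Continuous f) (x : ℝ) :
    Integrable fun y => f (x, y) := by
  obtain ⟨C, hC⟩ := hf
  have hC0 := nonneg_of_quartic_bound hC
  refine (integrable_quartic (volume : Measure ℝ) (by simp) C).mono'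
    (by fun_prop : Continuous fun y => f (x, y)).aestronglyMeasurable
    (Filter.Eventually.of_forall fun y => (hC _).trans ?_)
  gcongr
  exact norm_snd_le (x, y)

lemma add {F : Type*} [SeminormedAddGroup F] {f g : ℝ × ℝ → F} (hf : QuarticDecay f)
    (hg : QuarticDecay g) : QuarticDecay fun q => f q + g q := by
  obtain ⟨A, hA⟩ := hf
  obtain ⟨B, hB⟩ := hg
  refine ⟨A + B, fun q => (norm_add_le _ _).trans ?_⟩
  rw [add_div]
  exact add_le_add (hA q) (hB q)

lemma smul {F : Type*} [SeminormedAddCommGroup F] [NormedSpace ℝ F] {g : ℝ × ℝ → F}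
    (hf : QuarticDecay f) (hg : QuarticDecay g) : QuarticDecay fun q => f q • g q := by
  obtain ⟨A, hA⟩ := hf
  obtain ⟨B, hB⟩ := hg
  have hA0 := nonneg_of_quartic_bound hA
  refine ⟨A * B, fun q => ?_⟩
  rw [norm_smul, mul_div_assoc]
  exact mul_le_mul ((hA q).trans (div_one_add_norm_pow_le hA0 q)) (hB q) (norm_nonneg _) hA0

lemma mul (hf : QuarticDecay f) (hg : QuarticDecay g) : QuarticDecay fun q => f q * g q :=
  hf.smul hg

lemma apply {f : ℝ × ℝ → (ℝ × ℝ →L[ℝ] ℝ)} (hf : QuarticDecay f) {v : ℝ × ℝ} (hv : ‖v‖ ≤ 1) :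
    QuarticDecay fun q => f q v := by
  obtain ⟨C, hC⟩ := hf
  exact ⟨C, fun q => ((f q).le_of_opNorm_le_of_le le_rfl hv).trans (by simpa using hC q)⟩

end QuarticDecay

/-- A `C¹` function which decays together with its derivative. -/
structure DecayingC1 (f : ℝ × ℝ → ℝ) : Prop where
  contDiff : ContDiff ℝ 1 f
  decay : QuarticDecay f
  decay_fderiv : QuarticDecay (fderiv ℝ f)

/-- A function which is decaying of class `C¹`, and so are its partial derivatives. -/
structure DecayingC2 (f : ℝ × ℝ → ℝ) : Prop extends DecayingC1 f where
  decaying_pdx : DecayingC1 (pdx f)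
  decaying_pdy : DecayingC1 (pdy f)

namespace DecayingC1

lemma continuous (hf : DecayingC1 f) : Continuous f := hf.contDiff.continuous

lemma differentiable (hf : DecayingC1 f) : Differentiable ℝ f :=
  hf.contDiff.differentiable one_ne_zero

lemma integrable (hf : DecayingC1 f) : Integrable f halfPlane :=
  hf.decay.integrable hf.continuous

lemma continuous_pdx (hf : DecayingC1 f) : Continuous (pdx f) :=
  (hf.contDiff.continuous_fderiv one_ne_zero).clm_apply continuous_const

lemma continuous_pdy (hf : DecayingC1 f) : Continuous (pdy f) :=
  (hf.contDiff.continuous_fderiv one_ne_zero).clm_apply continuous_const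

lemma decay_pdx (hf : DecayingC1 f) : QuarticDecay (pdx f) :=
  hf.decay_fderiv.apply (by simp [Prod.norm_def])

lemma decay_pdy (hf : DecayingC1 f) : QuarticDecay (pdy f) :=
  hf.decay_fderiv.apply (by simp [Prod.norm_def])

lemma integrable_pdx (hf : DecayingC1 f) : Integrable (pdx f) halfPlane :=
  hf.decay_pdx.integrable hf.continuous_pdx

lemma integrable_pdy (hf : DecayingC1 f) : Integrable (pdy f) halfPlane :=
  hf.decay_pdy.integrable hf.continuous_pdy

lemma mul (hf : DecayingC1 f) (hg : DecayingC1 g) : DecayingC1 fun q => f q * g q where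
  contDiff := hf.contDiff.mul hg.contDiff
  decay := hf.decay.mul hg.decay
  decay_fderiv := by
    have : fderiv ℝ (fun q => f q * g q) = fun q => f q • fderiv ℝ g q + g q • fderiv ℝ f q :=
      funext fun q => fderiv_fun_mul (hf.differentiable q) (hg.differentiable q)
    rw [this]
    exact (hf.decay.smul hg.decay_fderiv).add (hg.decay.smul hf.decay_fderiv)

lemma pdx_mul (hf : DecayingC1 f) (hg : DecayingC1 g) (q : ℝ × ℝ) :
    pdx (fun q => f q * g q) q = f q * pdx g q + g q * pdx f q := by
  simp [pdx, fderiv_fun_mul (hf.differentiable q) (hg.differentiable q)]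

lemma pdy_mul (hf : DecayingC1 f) (hg : DecayingC1 g) (q : ℝ × ℝ) :
    pdy (fun q => f q * g q) q = f q * pdy g q + g q * pdy f q := by
  simp [pdy, fderiv_fun_mul (hf.differentiable q) (hg.differentiable q)]

lemma integral_pdx (hf : DecayingC1 f) : ∫ q, pdx f q ∂halfPlane = 0 := by
  have hi := hf.integrable_pdx
  rw [halfPlane_eq_prod] at hi ⊢
  rw [integral_prod_symm _ hi]
  refine integral_eq_zero_of_ae (Filter.Eventually.of_forall fun y => ?_)
  refine integral_eq_zero_of_hasDerivAt_of_integrable (f := fun x => f (x, y)) (fun x => ?_)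
    (hf.decay_pdx.integrable_fst hf.continuous_pdx y) (hf.decay.integrable_fst hf.continuous y)
  exact (hf.differentiable (x, y)).hasFDerivAt.comp_hasDerivAt x
    ((hasDerivAt_id x).prodMk (hasDerivAt_const x y))

lemma integral_pdy (hf : DecayingC1 f) (h0 : ∀ x, f (x, 0) = 0) :
    ∫ q, pdy f q ∂halfPlane = 0 := by
  have hi := hf.integrable_pdy
  rw [halfPlane_eq_prod] at hi ⊢
  rw [integral_prod _ hi]
  refine integral_eq_zero_of_ae (Filter.Eventually.of_forall fun x => ?_)
  have hd : ∀ y, HasDerivAt (fun y => f (x, y)) (pdy f (x, y)) y := fun y =>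
    (hf.differentiable (x, y)).hasFDerivAt.comp_hasDerivAt y
      ((hasDerivAt_const y x).prodMk (hasDerivAt_id y))
  have hi' := (hf.decay_pdy.integrable_snd hf.continuous_pdy x).integrableOn (s := Set.Ioi 0)
  have ht := tendsto_zero_of_hasDerivAt_of_integrableOn_Ioi (fun y _ => hd y) hi'
    (hf.decay.integrable_snd hf.continuous x).integrableOn
  simpa [h0] using integral_Ioi_of_hasDerivAt_of_tendsto' (fun y _ => hd y) hi' ht

end DecayingC1

lemma ae_halfPlane : ∀ᵐ q ∂halfPlane, 0 ≤ q.2 := by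
  have hm : MeasurableSet {q : ℝ × ℝ | 0 < q.2} := measurableSet_lt measurable_const measurable_snd
  filter_upwards [ae_restrict_mem hm] with q hq using le_of_lt hq

/-- A divergence-free field with vanishing normal trace is orthogonal to gradients. -/
lemma integral_inner_gradient_eq_zero {u w Q : ℝ × ℝ → ℝ} (hu : DecayingC1 u) (hw : DecayingC1 w)
    (hQ : DecayingC1 Q) (hdiv : ∀ q : ℝ × ℝ, 0 ≤ q.2 → pdx u q + pdy w q = 0)
    (hw0 : ∀ x, w (x, 0) = 0) :
    Integrable (fun q => u q * pdx Q q + w q * pdy Q q) halfPlane ∧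
      ∫ q, (u q * pdx Q q + w q * pdy Q q) ∂halfPlane = 0 := by
  have huQ := hu.mul hQ
  have hwQ := hw.mul hQ
  have hae : (fun q => pdx (fun q => u q * Q q) q + pdy (fun q => w q * Q q) q)
      =ᵐ[halfPlane] fun q => u q * pdx Q q + w q * pdy Q q := by
    filter_upwards [ae_halfPlane] with q hq
    rw [hu.pdx_mul hQ, hw.pdy_mul hQ]
    linear_combination Q q * hdiv q hq
  refine ⟨(huQ.integrable_pdx.add hwQ.integrable_pdy).congr hae, ?_⟩
  rw [← integral_congr_ae hae, integral_add huQ.integrable_pdx hwQ.integrable_pdy,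
    huQ.integral_pdx, hwQ.integral_pdy fun x => by simp [hw0], add_zero]

/-- Transport of `f` by a divergence-free field with vanishing normal trace conserves the
`L²` norm. -/
lemma integral_transport_eq_zero {u w f : ℝ × ℝ → ℝ} (hu : DecayingC1 u) (hw : DecayingC1 w)
    (hf : DecayingC1 f) (hdiv : ∀ q : ℝ × ℝ, 0 ≤ q.2 → pdx u q + pdy w q = 0)
    (hw0 : ∀ x, w (x, 0) = 0) :
    Integrable (fun q => 2 * f q * (u q * pdx f q + w q * pdy f q)) halfPlane ∧
      ∫ q, 2 * f q * (u q * pdx f q + w q * pdy f q) ∂halfPlane = 0 := by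
  have h := integral_inner_gradient_eq_zero hu hw (hf.mul hf) hdiv hw0
  have he : (fun q => u q * pdx (fun q => f q * f q) q + w q * pdy (fun q => f q * f q) q)
      = fun q => 2 * f q * (u q * pdx f q + w q * pdy f q) := by
    funext q
    rw [hf.pdx_mul hf, hf.pdy_mul hf]
    ring
  rwa [he] at h

/-- Under a homogeneous Dirichlet or Neumann condition the Laplacian is dissipative. -/
lemma integral_mul_lap_nonpos (hf : DecayingC2 f) (h0 : ∀ x, f (x, 0) * pdy f (x, 0) = 0) :
    Integrable (fun q => f q * lap f q) halfPlane ∧ ∫ q, f q * lap f q ∂halfPlane ≤ 0 := by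
  have hx := hf.toDecayingC1.mul hf.decaying_pdx
  have hy := hf.toDecayingC1.mul hf.decaying_pdy
  have hxx := (hf.decaying_pdx.mul hf.decaying_pdx).integrable
  have hyy := (hf.decaying_pdy.mul hf.decaying_pdy).integrable
  have he : (fun q => f q * lap f q) = fun q =>
      (pdx (fun q => f q * pdx f q) q + pdy (fun q => f q * pdy f q) q)
        - (pdx f q * pdx f q + pdy f q * pdy f q) := by
    funext q
    rw [hf.toDecayingC1.pdx_mul hf.decaying_pdx, hf.toDecayingC1.pdy_mul hf.decaying_pdy, lap]
    ring
  rw [he]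
  have hdiv : Integrable (fun q => pdx (fun q => f q * pdx f q) q
      + pdy (fun q => f q * pdy f q) q) halfPlane := hx.integrable_pdx.add hy.integrable_pdy
  have hgrad : Integrable (fun q => pdx f q * pdx f q + pdy f q * pdy f q) halfPlane :=
    hxx.add hyy
  refine ⟨hdiv.sub hgrad, ?_⟩
  rw [integral_sub hdiv hgrad,
    integral_add hx.integrable_pdx hy.integrable_pdy, hx.integral_pdx, hy.integral_pdy h0]
  have : 0 ≤ ∫ q, (pdx f q * pdx f q + pdy f q * pdy f q) ∂halfPlane :=
    integral_nonneg fun q => add_nonneg (mul_self_nonneg _) (mul_self_nonneg _)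
  linarith

end QuarticDecay

lemma pdx_sub {f g : ℝ × ℝ → ℝ} (hf : Differentiable ℝ f) (hg : Differentiable ℝ g) :
    pdx (fun q => f q - g q) = fun q => pdx f q - pdx g q := by
  funext q
  simp [pdx, fderiv_fun_sub (hf q) (hg q)]

lemma pdy_sub {f g : ℝ × ℝ → ℝ} (hf : Differentiable ℝ f) (hg : Differentiable ℝ g) :
    pdy (fun q => f q - g q) = fun q => pdy f q - pdy g q := by
  funext q
  simp [pdy, fderiv_fun_sub (hf q) (hg q)]

/-- A smooth family of functions with uniform spatial decay on `[0, T]`. -/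
structure SmoothDecaying (T : ℝ) (f : ℝ → ℝ × ℝ → ℝ) : Prop where
  contDiff : ContDiff ℝ (⊤ : ℕ∞) (uncurry f)
  decay : ∃ C, DecaysUniformly T C f

namespace SmoothDecaying

variable {T : ℝ} {f g : ℝ → ℝ × ℝ → ℝ}

lemma contDiff_slice (hf : SmoothDecaying T f) (t : ℝ) : ContDiff ℝ (⊤ : ℕ∞) (f t) :=
  hf.contDiff.comp (contDiff_const.prodMk contDiff_id : ContDiff ℝ (⊤ : ℕ∞) fun q => (t, q))

lemma contDiff_fderiv (hf : SmoothDecaying T f) (t : ℝ) :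
    ContDiff ℝ (⊤ : ℕ∞) (fderiv ℝ (f t)) :=
  (hf.contDiff_slice t).fderiv_right (by simp)

lemma differentiable_slice (hf : SmoothDecaying T f) (t : ℝ) : Differentiable ℝ (f t) :=
  (hf.contDiff_slice t).differentiable (by simp)

lemma differentiable_fderiv (hf : SmoothDecaying T f) (t : ℝ) :
    Differentiable ℝ (fderiv ℝ (f t)) :=
  (hf.contDiff_fderiv t).differentiable (by simp)

lemma contDiff_pdx (hf : SmoothDecaying T f) (t : ℝ) : ContDiff ℝ (⊤ : ℕ∞) (pdx (f t)) :=
  (hf.contDiff_fderiv t).clm_apply contDiff_const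

lemma contDiff_pdy (hf : SmoothDecaying T f) (t : ℝ) : ContDiff ℝ (⊤ : ℕ∞) (pdy (f t)) :=
  (hf.contDiff_fderiv t).clm_apply contDiff_const

lemma hasDerivAt_time (hf : SmoothDecaying T f) (t : ℝ) (q : ℝ × ℝ) :
    HasDerivAt (fun s => f s q) (fderiv ℝ (uncurry f) (t, q) (1, 0)) t :=
  HasFDerivAt.comp_hasDerivAt (f := fun s => (s, q)) t
    ((hf.contDiff.differentiable (by simp)) (t, q)).hasFDerivAt
    ((hasDerivAt_id t).prodMk (hasDerivAt_const t q))

lemma differentiableAt_time (hf : SmoothDecaying T f) (t : ℝ) (q : ℝ × ℝ) :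
    DifferentiableAt ℝ (fun s => f s q) t :=
  (hf.hasDerivAt_time t q).differentiableAt

lemma continuous_deriv_time (hf : SmoothDecaying T f) (t : ℝ) :
    Continuous fun q => deriv (fun s => f s q) t := by
  simp only [fun q => (hf.hasDerivAt_time t q).deriv]
  have : Continuous (fderiv ℝ (uncurry f)) := hf.contDiff.continuous_fderiv (by simp)
  fun_prop

lemma decayingC1_fderiv_apply (hf : SmoothDecaying T f) {t : ℝ} (ht : t ∈ Set.Icc 0 T)
    {v : ℝ × ℝ} (hv : ‖v‖ ≤ 1) : DecayingC1 fun q => fderiv ℝ (f t) q v := by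
  obtain ⟨C, hC⟩ := hf.decay
  refine ⟨((hf.contDiff_fderiv t).clm_apply contDiff_const).of_le (by simp),
    QuarticDecay.apply ⟨C, fun q => (hC t ht q).2.1⟩ hv, C, fun q => ?_⟩
  have he : fderiv ℝ (fun q => fderiv ℝ (f t) q v) q
      = (fderiv ℝ (fderiv ℝ (f t)) q).flip v := by
    refine ContinuousLinearMap.ext fun z => ?_
    simp [fderiv_clm_apply (hf.differentiable_fderiv t q) (differentiableAt_const v)]
  rw [he]
  refine (ContinuousLinearMap.le_of_opNorm_le_of_le _ le_rfl hv).trans ?_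
  rw [mul_one, ContinuousLinearMap.opNorm_flip]
  exact (hC t ht q).2.2.1

lemma decayingC2 (hf : SmoothDecaying T f) {t : ℝ} (ht : t ∈ Set.Icc 0 T) :
    DecayingC2 (f t) := by
  obtain ⟨C, hC⟩ := hf.decay
  exact ⟨⟨(hf.contDiff_slice t).of_le (by simp), ⟨C, fun q => (hC t ht q).1⟩,
    ⟨C, fun q => (hC t ht q).2.1⟩⟩, hf.decayingC1_fderiv_apply ht (by simp [Prod.norm_def]),
    hf.decayingC1_fderiv_apply ht (by simp [Prod.norm_def])⟩

lemma sub (hf : SmoothDecaying T f) (hg : SmoothDecaying T g) :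
    SmoothDecaying T fun t q => f t q - g t q := by
  refine ⟨hf.contDiff.sub hg.contDiff, ?_⟩
  obtain ⟨A, hA⟩ := hf.decay
  obtain ⟨B, hB⟩ := hg.decay
  refine ⟨A + B, fun t ht q => ?_⟩
  obtain ⟨a₀, a₁, a₂, a₃⟩ := hA t ht q
  obtain ⟨b₀, b₁, b₂, b₃⟩ := hB t ht q
  have hfd : (fderiv ℝ fun q => f t q - g t q) = fun q => fderiv ℝ (f t) q - fderiv ℝ (g t) q :=
    funext fun q => fderiv_fun_sub (hf.differentiable_slice t q) (hg.differentiable_slice t q)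
  rw [hfd, fderiv_fun_sub (hf.differentiable_fderiv t q) (hg.differentiable_fderiv t q),
    deriv_fun_sub (hf.differentiableAt_time t q) (hg.differentiableAt_time t q), add_div]
  exact ⟨(abs_sub _ _).trans (add_le_add a₀ b₀), (norm_sub_le _ _).trans (add_le_add a₁ b₁),
    (norm_sub_le (fderiv ℝ (fderiv ℝ (f t)) q) _).trans (add_le_add a₂ b₂), (abs_sub _ _).trans (add_le_add a₃ b₃)⟩

lemma pdx_sub (hf : SmoothDecaying T f) (hg : SmoothDecaying T g) (t : ℝ) (q : ℝ × ℝ) :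
    pdx (fun q => f t q - g t q) q = pdx (f t) q - pdx (g t) q :=
  congrFun (_root_.pdx_sub (hf.differentiable_slice t) (hg.differentiable_slice t)) q

lemma pdy_sub (hf : SmoothDecaying T f) (hg : SmoothDecaying T g) (t : ℝ) (q : ℝ × ℝ) :
    pdy (fun q => f t q - g t q) q = pdy (f t) q - pdy (g t) q :=
  congrFun (_root_.pdy_sub (hf.differentiable_slice t) (hg.differentiable_slice t)) q

lemma lap_sub (hf : SmoothDecaying T f) (hg : SmoothDecaying T g) (t : ℝ) (q : ℝ × ℝ) :
    lap (fun q => f t q - g t q) q = lap (f t) q - lap (g t) q := by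
  have hx := _root_.pdx_sub ((hf.contDiff_pdx t).differentiable (by simp))
    ((hg.contDiff_pdx t).differentiable (by simp))
  have hy := _root_.pdy_sub ((hf.contDiff_pdy t).differentiable (by simp))
    ((hg.contDiff_pdy t).differentiable (by simp))
  rw [lap, _root_.pdx_sub (hf.differentiable_slice t) (hg.differentiable_slice t),
    _root_.pdy_sub (hf.differentiable_slice t) (hg.differentiable_slice t), hx, hy, lap, lap]
  ring

lemma deriv_sub (hf : SmoothDecaying T f) (hg : SmoothDecaying T g) (t : ℝ) (q : ℝ × ℝ) :
    deriv (fun s => f s q - g s q) t = deriv (fun s => f s q) t - deriv (fun s => g s q) t :=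
  deriv_fun_sub (hf.differentiableAt_time t q) (hg.differentiableAt_time t q)

end SmoothDecaying

/-- The `L²` norm of a continuous family with uniform decay is continuous in time. -/
lemma continuousOn_integral_sq {T : ℝ} {r : ℝ → ℝ × ℝ → ℝ} (hr : Continuous (uncurry r))
    (hd : ∃ C : ℝ, ∀ t ∈ Set.Icc 0 T, ∀ q : ℝ × ℝ, |r t q| ≤ C / (1 + ‖q‖) ^ 4) :
    (∀ t ∈ Set.Icc 0 T, Integrable (fun q => (r t q) ^ 2) halfPlane) ∧
      ContinuousOn (fun t => ∫ q, (r t q) ^ 2 ∂halfPlane) (Set.Icc 0 T) := by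
  obtain ⟨C, hC⟩ := hd
  have hcq : ∀ t, Continuous fun q => (r t q) ^ 2 := fun t =>
    (hr.comp (by fun_prop : Continuous fun q : ℝ × ℝ => (t, q))).pow 2
  have hct : ∀ q, Continuous fun t => (r t q) ^ 2 := fun q =>
    (hr.comp (by fun_prop : Continuous fun t : ℝ => (t, q))).pow 2
  have hb : ∀ t ∈ Set.Icc 0 T, ∀ q, ‖(r t q) ^ 2‖ ≤ C * C / (1 + ‖q‖) ^ 4 := by
    intro t ht q
    have hC0 : 0 ≤ C := nonneg_of_quartic_bound (f := r t) (hC t ht)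
    rw [norm_pow, Real.norm_eq_abs, sq, mul_div_assoc]
    exact mul_le_mul ((hC t ht q).trans (div_one_add_norm_pow_le hC0 q)) (hC t ht q)
      (abs_nonneg _) hC0
  refine ⟨fun t ht => (integrable_quartic_halfPlane (C * C)).mono' (hcq t).aestronglyMeasurable
    (Filter.Eventually.of_forall (hb t ht)), ?_⟩
  exact continuousOn_of_dominated (fun t _ => (hcq t).aestronglyMeasurable)
    (fun t ht => Filter.Eventually.of_forall (hb t ht)) (integrable_quartic_halfPlane (C * C))
    (Filter.Eventually.of_forall fun q => (hct q).continuousOn)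

/-- Differentiation of the squared `L²` norm in time. -/
lemma SmoothDecaying.hasDerivAt_integral_sq {T : ℝ} {f : ℝ → ℝ × ℝ → ℝ}
    (hf : SmoothDecaying T f) {t : ℝ} (ht : t ∈ Set.Ioo 0 T) :
    Integrable (fun q => 2 * f t q * deriv (fun s => f s q) t) halfPlane ∧
      HasDerivAt (fun t => ∫ q, (f t q) ^ 2 ∂halfPlane)
        (∫ q, 2 * f t q * deriv (fun s => f s q) t ∂halfPlane) t := by
  obtain ⟨C, hC⟩ := hf.decay
  have hcq : ∀ t, Continuous (f t) := fun t => (hf.contDiff_slice t).continuous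
  refine hasDerivAt_integral_of_dominated_loc_of_deriv_le (Ioo_mem_nhds ht.1 ht.2)
    (F' := fun t q => 2 * f t q * deriv (fun s => f s q) t)
    (bound := fun q => 2 * C * C / (1 + ‖q‖) ^ 4)
    (Filter.Eventually.of_forall fun t => ((hcq t).pow 2).aestronglyMeasurable)
    ((continuousOn_integral_sq hf.contDiff.continuous ⟨C, fun t ht q => (hC t ht q).1⟩).1 t
      (Set.Ioo_subset_Icc_self ht))
    ((continuous_const.mul (hcq t)).mul (hf.continuous_deriv_time t)).aestronglyMeasurable
    (Filter.Eventually.of_forall fun q s hs => ?_) (integrable_quartic_halfPlane _)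
    (Filter.Eventually.of_forall fun q s _ => ?_)
  · obtain ⟨h₀, -, -, h₁⟩ := hC s (Set.Ioo_subset_Icc_self hs) q
    have hC0 : 0 ≤ C :=
      nonneg_of_quartic_bound (f := f s) fun q => (hC s (Set.Ioo_subset_Icc_self hs) q).1
    rw [norm_mul, norm_mul, Real.norm_eq_abs, Real.norm_eq_abs, Real.norm_eq_abs, mul_div_assoc,
      abs_two]
    gcongr
    exact h₀.trans (div_one_add_norm_pow_le hC0 q)
  · simpa using (hf.differentiableAt_time s q).hasDerivAt.fun_pow 2

/-- Integral form of the Gronwall inequality. -/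
lemma gronwall_of_hasDerivAt {T : ℝ} {φ φ' ρ a : ℝ → ℝ} (hφ : ContinuousOn φ (Set.Icc 0 T))
    (hφ' : ∀ t ∈ Set.Ioo 0 T, HasDerivAt φ (φ' t) t) (hρ : ContinuousOn ρ (Set.Icc 0 T))
    (hρ0 : ∀ t, 0 ≤ ρ t) (ha : Continuous a) (ha0 : ∀ t, 0 ≤ a t)
    (hle : ∀ t ∈ Set.Ioo 0 T, φ' t ≤ a t * φ t + ρ t) :
    ∀ t ∈ Set.Icc 0 T,
      φ t ≤ (φ 0 + ∫ s in (0 : ℝ)..t, ρ s) * Real.exp (∫ s in (0 : ℝ)..t, a s) := by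
  intro t ht
  have hT : 0 ≤ T := ht.1.trans ht.2
  have hA : ∀ s, HasDerivAt (fun t => ∫ s in (0 : ℝ)..t, a s) (a s) s := fun s =>
    intervalIntegral.integral_hasDerivAt_right (ha.intervalIntegrable _ _)
      (ha.stronglyMeasurableAtFilter _ _) ha.continuousAt
  have hR : ∀ s ∈ Set.Ioo 0 T, HasDerivAt (fun t => ∫ s in (0 : ℝ)..t, ρ s) (ρ s) s := by
    intro s hs
    have hmem : Set.Icc 0 T ∈ nhds s := Icc_mem_nhds hs.1 hs.2
    refine intervalIntegral.integral_hasDerivAt_right ?_ ?_ (hρ.continuousAt hmem)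
    · refine (hρ.mono ?_).intervalIntegrable
      rw [Set.uIcc_of_le hs.1.le]
      exact Set.Icc_subset_Icc_right hs.2.le
    · exact ⟨_, hmem, hρ.aestronglyMeasurable measurableSet_Icc⟩
  have hRc : ContinuousOn (fun t => ∫ s in (0 : ℝ)..t, ρ s) (Set.Icc 0 T) := by
    have := intervalIntegral.continuousOn_primitive_interval (μ := volume) (a := 0) (b := T)
      (f := ρ) (by rw [Set.uIcc_of_le hT]; exact hρ.integrableOn_Icc)
    rwa [Set.uIcc_of_le hT] at this
  have hder : ∀ s ∈ Set.Ioo 0 T, HasDerivAt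
      (fun t => φ t * Real.exp (-∫ s in (0 : ℝ)..t, a s) - ∫ s in (0 : ℝ)..t, ρ s)
      (φ' s * Real.exp (-∫ s in (0 : ℝ)..s, a s)
        + φ s * (Real.exp (-∫ s in (0 : ℝ)..s, a s) * -a s) - ρ s) s := fun s hs =>
    ((hφ' s hs).mul (hA s).neg.exp).sub (hR s hs)
  have hanti : AntitoneOn
      (fun t => φ t * Real.exp (-∫ s in (0 : ℝ)..t, a s) - ∫ s in (0 : ℝ)..t, ρ s)
      (Set.Icc 0 T) := by
    refine antitoneOn_of_deriv_nonpos (convex_Icc 0 T) ?_ ?_ ?_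
    · have hAc : Continuous fun t => ∫ s in (0 : ℝ)..t, a s :=
        continuous_iff_continuousAt.2 fun s => (hA s).continuousAt
      exact (hφ.mul (Real.continuous_exp.comp hAc.neg).continuousOn).sub hRc
    · rw [interior_Icc]
      exact fun s hs => (hder s hs).differentiableAt.differentiableWithinAt
    · rw [interior_Icc]
      intro s hs
      rw [(hder s hs).deriv]
      have hpos := Real.exp_pos (-∫ s in (0 : ℝ)..s, a s)
      have hle1 : Real.exp (-∫ s in (0 : ℝ)..s, a s) ≤ 1 := by
        rw [Real.exp_le_one_iff, neg_nonpos]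
        exact intervalIntegral.integral_nonneg hs.1.le fun x _ => ha0 x
      nlinarith [mul_le_mul_of_nonneg_right (hle s hs) hpos.le,
        mul_le_mul_of_nonneg_left hle1 (hρ0 s)]
  have h := hanti ⟨le_rfl, hT⟩ ht ht.1
  simp only [intervalIntegral.integral_same, neg_zero, Real.exp_zero, mul_one, sub_zero] at h
  have h' : φ t * Real.exp (-∫ s in (0 : ℝ)..t, a s) ≤ φ 0 + ∫ s in (0 : ℝ)..t, ρ s := by
    linarith
  rwa [Real.exp_neg, ← div_eq_mul_inv, div_le_iff₀ (Real.exp_pos _)] at h'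

/-- The quadratic form of the gradient is controlled by its Frobenius norm. -/
lemma neg_stretching_le {x y z a₁ a₂ a₃ a₄ a₅ a₆ M : ℝ} (hM0 : 0 ≤ M)
    (hM : Real.sqrt (a₁ ^ 2 + a₂ ^ 2 + a₃ ^ 2 + a₄ ^ 2 + a₅ ^ 2 + a₆ ^ 2) ≤ M) :
    -(x * (x * a₁ + y * a₂) + y * (x * a₃ + y * a₄) + z * (x * a₅ + y * a₆))
      ≤ M * (x ^ 2 + y ^ 2 + z ^ 2) := by
  have hM2 := (Real.sqrt_le_left hM0).1 hM
  have hcs := Finset.sum_mul_sq_le_sq_mul_sq Finset.univ ![a₁, a₂, a₃, a₄, a₅, a₆]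
    ![x * x, x * y, y * x, y * y, z * x, z * y]
  simp only [Fin.sum_univ_six, Fin.isValue, Matrix.cons_val] at hcs
  refine (neg_le_abs _).trans (abs_le_of_sq_le_sq ?_ (by positivity))
  have h₁ : (x * x) ^ 2 + (x * y) ^ 2 + (y * x) ^ 2 + (y * y) ^ 2 + (z * x) ^ 2 + (z * y) ^ 2
      ≤ (x ^ 2 + y ^ 2 + z ^ 2) ^ 2 := by
    nlinarith [sq_nonneg (x * z), sq_nonneg (y * z), sq_nonneg (z * z)]
  have h₂ := mul_le_mul hM2 h₁ (by positivity) (by positivity)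
  rw [mul_pow]
  refine le_trans (le_of_eq ?_) (hcs.trans h₂)
  ring

section NonposIntegral

variable {α : Type*} [MeasurableSpace α] {μ : Measure α} {f g : α → ℝ}

lemma integrable_and_integral_nonpos_add (hf : Integrable f μ ∧ ∫ x, f x ∂μ ≤ 0)
    (hg : Integrable g μ ∧ ∫ x, g x ∂μ ≤ 0) :
    Integrable (fun x => f x + g x) μ ∧ ∫ x, (f x + g x) ∂μ ≤ 0 :=
  ⟨hf.1.add hg.1, by rw [integral_add hf.1 hg.1]; exact add_nonpos hf.2 hg.2⟩

lemma integrable_and_integral_nonpos_const_mul {c : ℝ} (hc : 0 ≤ c)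
    (hf : Integrable f μ ∧ ∫ x, f x ∂μ ≤ 0) :
    Integrable (fun x => c * f x) μ ∧ ∫ x, c * f x ∂μ ≤ 0 :=
  ⟨hf.1.const_mul c, by rw [integral_const_mul]; exact mul_nonpos_of_nonneg_of_nonpos hc hf.2⟩

lemma integrable_and_integral_nonpos_of_eq_zero (c : ℝ) (hf : Integrable f μ ∧ ∫ x, f x ∂μ = 0) :
    Integrable (fun x => c * f x) μ ∧ ∫ x, c * f x ∂μ ≤ 0 :=
  ⟨hf.1.const_mul c, by rw [integral_const_mul, hf.2, mul_zero]⟩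

lemma integral_add_add {h : α → ℝ} (hf : Integrable f μ) (hg : Integrable g μ)
    (hh : Integrable h μ) :
    ∫ x, (f x + g x + h x) ∂μ = ∫ x, f x ∂μ + ∫ x, g x ∂μ + ∫ x, h x ∂μ := by
  rw [← integral_add hf hg]
  exact integral_add (hf.add hg) hh

end NonposIntegral

/-- **L² stability (Gronwall) estimate for the weakly nonlinear viscous Boussinesq
system.**  If `𝒲 = (u,w,b)` is an exact solution and `𝒲ₐ = (uₐ,wₐ,bₐ)` solves the same
system up to a remainder `R = (Ru,Rw,Rb)`, both divergence free and satisfying the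
boundary conditions, and if `M s` dominates `‖∇𝒲ₐ(s)‖_{L^∞}`, then
`‖(𝒲ₐ−𝒲)(t)‖²_{L²} ≤ (‖(𝒲ₐ−𝒲)(0)‖²_{L²} + ∫₀ᵗ‖R‖²_{L²}) exp(∫₀ᵗ(2δ‖∇𝒲ₐ‖_∞ + 1))`. -/
theorem boussinesq_stability_estimate
    (γ δ ν₀ κ₀ ε T : ℝ) (hγ : γ ∈ Set.Ioo 0 (Real.pi / 2)) (hδ : 0 ≤ δ)
    (hν₀ : 0 < ν₀) (hκ₀ : 0 < κ₀) (hε : 0 < ε) (hT : 0 < T)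
    (u w b p ua wa ba pa Ru Rw Rb : ℝ → ℝ × ℝ → ℝ)
    (hsu : ContDiff ℝ (⊤ : ℕ∞) (uncurry u)) (hsw : ContDiff ℝ (⊤ : ℕ∞) (uncurry w))
    (hsb : ContDiff ℝ (⊤ : ℕ∞) (uncurry b)) (hsp : ContDiff ℝ (⊤ : ℕ∞) (uncurry p))
    (hsua : ContDiff ℝ (⊤ : ℕ∞) (uncurry ua)) (hswa : ContDiff ℝ (⊤ : ℕ∞) (uncurry wa))
    (hsba : ContDiff ℝ (⊤ : ℕ∞) (uncurry ba)) (hspa : ContDiff ℝ (⊤ : ℕ∞) (uncurry pa))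
    (hsRu : Continuous (uncurry Ru)) (hsRw : Continuous (uncurry Rw))
    (hsRb : Continuous (uncurry Rb))
    (hdecay : ∃ C : ℝ, DecaysUniformly T C u ∧ DecaysUniformly T C w ∧
      DecaysUniformly T C b ∧ DecaysUniformly T C p ∧
      DecaysUniformly T C ua ∧ DecaysUniformly T C wa ∧
      DecaysUniformly T C ba ∧ DecaysUniformly T C pa)
    (hRdecay : ∃ C : ℝ, ∀ t ∈ Set.Icc 0 T, ∀ q : ℝ × ℝ,
      |Ru t q| ≤ C / (1 + ‖q‖) ^ 4 ∧ |Rw t q| ≤ C / (1 + ‖q‖) ^ 4 ∧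
      |Rb t q| ≤ C / (1 + ‖q‖) ^ 4)
    -- the exact solution
    (hequ : ∀ t ∈ Set.Icc 0 T, ∀ q : ℝ × ℝ, 0 ≤ q.2 →
      deriv (fun s => u s q) t + δ * (u t q * pdx (u t) q + w t q * pdy (u t) q)
          - Real.sin γ * b t q + pdx (p t) q = ν₀ * ε ^ 6 * lap (u t) q)
    (heqw : ∀ t ∈ Set.Icc 0 T, ∀ q : ℝ × ℝ, 0 ≤ q.2 →
      deriv (fun s => w s q) t + δ * (u t q * pdx (w t) q + w t q * pdy (w t) q)
          - Real.cos γ * b t q + pdy (p t) q = ν₀ * ε ^ 6 * lap (w t) q)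
    (heqb : ∀ t ∈ Set.Icc 0 T, ∀ q : ℝ × ℝ, 0 ≤ q.2 →
      deriv (fun s => b s q) t + δ * (u t q * pdx (b t) q + w t q * pdy (b t) q)
          + Real.sin γ * u t q + Real.cos γ * w t q = κ₀ * ε ^ 6 * lap (b t) q)
    (hdiv : ∀ t ∈ Set.Icc 0 T, ∀ q : ℝ × ℝ, 0 ≤ q.2 → pdx (u t) q + pdy (w t) q = 0)
    (hbc : ∀ t ∈ Set.Icc 0 T, ∀ x : ℝ,
      u t (x, 0) = 0 ∧ w t (x, 0) = 0 ∧ pdy (b t) (x, 0) = 0)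
    -- the approximate solution, solving the system with remainder R
    (hequa : ∀ t ∈ Set.Icc 0 T, ∀ q : ℝ × ℝ, 0 ≤ q.2 →
      deriv (fun s => ua s q) t + δ * (ua t q * pdx (ua t) q + wa t q * pdy (ua t) q)
          - Real.sin γ * ba t q + pdx (pa t) q = ν₀ * ε ^ 6 * lap (ua t) q + Ru t q)
    (heqwa : ∀ t ∈ Set.Icc 0 T, ∀ q : ℝ × ℝ, 0 ≤ q.2 →
      deriv (fun s => wa s q) t + δ * (ua t q * pdx (wa t) q + wa t q * pdy (wa t) q)
          - Real.cos γ * ba t q + pdy (pa t) q = ν₀ * ε ^ 6 * lap (wa t) q + Rw t q)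
    (heqba : ∀ t ∈ Set.Icc 0 T, ∀ q : ℝ × ℝ, 0 ≤ q.2 →
      deriv (fun s => ba s q) t + δ * (ua t q * pdx (ba t) q + wa t q * pdy (ba t) q)
          + Real.sin γ * ua t q + Real.cos γ * wa t q = κ₀ * ε ^ 6 * lap (ba t) q + Rb t q)
    (hdiva : ∀ t ∈ Set.Icc 0 T, ∀ q : ℝ × ℝ, 0 ≤ q.2 → pdx (ua t) q + pdy (wa t) q = 0)
    (hbca : ∀ t ∈ Set.Icc 0 T, ∀ x : ℝ,
      ua t (x, 0) = 0 ∧ wa t (x, 0) = 0 ∧ pdy (ba t) (x, 0) = 0)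
    -- `M s` dominates the `L^∞` norm of the gradient of the approximate solution
    (M : ℝ → ℝ) (hMc : Continuous M) (hM0 : ∀ s, 0 ≤ M s)
    (hM : ∀ s ∈ Set.Icc 0 T, ∀ q : ℝ × ℝ, 0 ≤ q.2 →
      Real.sqrt ((pdx (ua s) q) ^ 2 + (pdy (ua s) q) ^ 2
        + (pdx (wa s) q) ^ 2 + (pdy (wa s) q) ^ 2
        + (pdx (ba s) q) ^ 2 + (pdy (ba s) q) ^ 2) ≤ M s) :
    ∀ t ∈ Set.Icc 0 T,
      (∫ q, ((ua t q - u t q) ^ 2 + (wa t q - w t q) ^ 2 + (ba t q - b t q) ^ 2)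
          ∂halfPlane)
        ≤ ((∫ q, ((ua 0 q - u 0 q) ^ 2 + (wa 0 q - w 0 q) ^ 2 + (ba 0 q - b 0 q) ^ 2)
              ∂halfPlane)
            + ∫ s in (0 : ℝ)..t,
                ∫ q, ((Ru s q) ^ 2 + (Rw s q) ^ 2 + (Rb s q) ^ 2) ∂halfPlane)
          * Real.exp (∫ s in (0 : ℝ)..t, (2 * δ * M s + 1)) := by
  obtain ⟨C, cu, cw, cb, cp, cua, cwa, cba, cpa⟩ := hdecay
  obtain ⟨K, hK⟩ := hRdecay
  have Du : SmoothDecaying T u := ⟨hsu, C, cu⟩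
  have Dw : SmoothDecaying T w := ⟨hsw, C, cw⟩
  have Db : SmoothDecaying T b := ⟨hsb, C, cb⟩
  have Dp : SmoothDecaying T p := ⟨hsp, C, cp⟩
  have Dua : SmoothDecaying T ua := ⟨hsua, C, cua⟩
  have Dwa : SmoothDecaying T wa := ⟨hswa, C, cwa⟩
  have Dba : SmoothDecaying T ba := ⟨hsba, C, cba⟩
  have Dpa : SmoothDecaying T pa := ⟨hspa, C, cpa⟩
  have Deu := Dua.sub Du
  have Dew := Dwa.sub Dw
  have Deb := Dba.sub Db
  have DeP := Dpa.sub Dp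
  have sq_of {f : ℝ → ℝ × ℝ → ℝ} (hf : SmoothDecaying T f) :=
    continuousOn_integral_sq hf.contDiff.continuous
      (hf.decay.imp fun C hC t ht q => (hC t ht q).1)
  have Seu := sq_of Deu
  have Sew := sq_of Dew
  have Seb := sq_of Deb
  have SRu := continuousOn_integral_sq hsRu ⟨K, fun t ht q => (hK t ht q).1⟩
  have SRw := continuousOn_integral_sq hsRw ⟨K, fun t ht q => (hK t ht q).2.1⟩
  have SRb := continuousOn_integral_sq hsRb ⟨K, fun t ht q => (hK t ht q).2.2⟩
  have hEsum : ∀ t ∈ Set.Icc 0 T, _ := fun t ht =>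
    integral_add_add (Seu.1 t ht) (Sew.1 t ht) (Seb.1 t ht)
  have hRsum : ∀ t ∈ Set.Icc 0 T, _ := fun t ht =>
    integral_add_add (SRu.1 t ht) (SRw.1 t ht) (SRb.1 t ht)
  refine gronwall_of_hasDerivAt
    (φ := fun t => ∫ q, ((ua t q - u t q) ^ 2 + (wa t q - w t q) ^ 2 + (ba t q - b t q) ^ 2)
      ∂halfPlane)
    (φ' := fun t => ∫ q, 2 * (ua t q - u t q) * deriv (fun s => ua s q - u s q) t ∂halfPlane
      + ∫ q, 2 * (wa t q - w t q) * deriv (fun s => wa s q - w s q) t ∂halfPlane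
      + ∫ q, 2 * (ba t q - b t q) * deriv (fun s => ba s q - b s q) t ∂halfPlane)
    (((Seu.2.add Sew.2).add Seb.2).congr hEsum) (fun t ht => ?_)
    (((SRu.2.add SRw.2).add SRb.2).congr hRsum) (fun t => integral_nonneg fun q => by positivity)
    (by fun_prop) (fun t => by have := hM0 t; positivity) (fun t ht => ?_)
  · refine (((Deu.hasDerivAt_integral_sq ht).2.add (Dew.hasDerivAt_integral_sq ht).2).add
      (Deb.hasDerivAt_integral_sq ht).2).congr_of_eventuallyEq ?_
    filter_upwards [Icc_mem_nhds ht.1 ht.2] with s hs using hEsum s hs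
  have ht' := Set.Ioo_subset_Icc_self ht
  have Ieu := (Deu.hasDerivAt_integral_sq ht).1
  have Iew := (Dew.hasDerivAt_integral_sq ht).1
  have Ieb := (Deb.hasDerivAt_integral_sq ht).1
  have hu := (Du.decayingC2 ht').toDecayingC1
  have hw := (Dw.decayingC2 ht').toDecayingC1
  have heu := Deu.decayingC2 ht'
  have hew := Dew.decayingC2 ht'
  have heb := Deb.decayingC2 ht'
  have hw0 : ∀ x, w t (x, 0) = 0 := fun x => (hbc t ht' x).2.1
  have hνε : 0 ≤ 2 * (ν₀ * ε ^ 6) := by positivity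
  have hκε : 0 ≤ 2 * (κ₀ * ε ^ 6) := by positivity
  have visc_u := integrable_and_integral_nonpos_const_mul hνε <| integral_mul_lap_nonpos heu
    fun x => by simp [(hbc t ht' x).1, (hbca t ht' x).1]
  have visc_w := integrable_and_integral_nonpos_const_mul hνε <| integral_mul_lap_nonpos hew
    fun x => by simp [(hbc t ht' x).2.1, (hbca t ht' x).2.1]
  have visc_b := integrable_and_integral_nonpos_const_mul hκε <| integral_mul_lap_nonpos heb
    fun x => by rw [Dba.pdy_sub Db]; simp [(hbc t ht' x).2.2, (hbca t ht' x).2.2]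
  have press := integrable_and_integral_nonpos_of_eq_zero (-2) <|
    integral_inner_gradient_eq_zero heu.toDecayingC1 hew.toDecayingC1
      (DeP.decayingC2 ht').toDecayingC1
      (fun q hq => by
        rw [Dua.pdx_sub Du, Dwa.pdy_sub Dw]
        linear_combination hdiva t ht' q hq - hdiv t ht' q hq)
      fun x => by simp [(hbc t ht' x).2.1, (hbca t ht' x).2.1]
  have trans_u := integrable_and_integral_nonpos_of_eq_zero (-δ) <|
    integral_transport_eq_zero hu hw heu.toDecayingC1 (hdiv t ht') hw0
  have trans_w := integrable_and_integral_nonpos_of_eq_zero (-δ) <|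
    integral_transport_eq_zero hu hw hew.toDecayingC1 (hdiv t ht') hw0
  have trans_b := integrable_and_integral_nonpos_of_eq_zero (-δ) <|
    integral_transport_eq_zero hu hw heb.toDecayingC1 (hdiv t ht') hw0
  have hZ := integrable_and_integral_nonpos_add
    (integrable_and_integral_nonpos_add (integrable_and_integral_nonpos_add visc_u visc_w) visc_b)
    (integrable_and_integral_nonpos_add press
      (integrable_and_integral_nonpos_add (integrable_and_integral_nonpos_add trans_u trans_w)
        trans_b))
  have hE := ((Seu.1 t ht').add (Sew.1 t ht')).add (Seb.1 t ht')
  have hR := ((SRu.1 t ht').add (SRw.1 t ht')).add (SRb.1 t ht')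
  have hEa := hE.const_mul (2 * δ * M t + 1)
  rw [← integral_add_add Ieu Iew Ieb, ← integral_const_mul]
  refine le_trans ?_ (add_le_of_nonpos_right hZ.2)
  refine (integral_mono_ae ((Ieu.add Iew).add Ieb) ((hEa.add hR).add hZ.1) ?_).trans_eq
    (integral_add_add hEa hR hZ.1)
  filter_upwards [ae_halfPlane] with q hq
  have hst := mul_le_mul_of_nonneg_left (neg_stretching_le (x := ua t q - u t q)
    (y := wa t q - w t q) (z := ba t q - b t q) (hM0 t) (hM t ht' q hq)) hδ
  simp only [Pi.add_apply, Dua.deriv_sub Du, Dwa.deriv_sub Dw, Dba.deriv_sub Db,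
    Dua.pdx_sub Du, Dwa.pdx_sub Dw, Dba.pdx_sub Db, Dua.pdy_sub Du, Dwa.pdy_sub Dw,
    Dba.pdy_sub Db, Dpa.pdx_sub Dp, Dpa.pdy_sub Dp, Dua.lap_sub Du, Dwa.lap_sub Dw,
    Dba.lap_sub Db]
  have e₁ := congrArg (2 * (ua t q - u t q) * ·)
    (congrArg₂ (· - ·) (hequa t ht' q hq) (hequ t ht' q hq))
  have e₂ := congrArg (2 * (wa t q - w t q) * ·)
    (congrArg₂ (· - ·) (heqwa t ht' q hq) (heqw t ht' q hq))
  have e₃ := congrArg (2 * (ba t q - b t q) * ·)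
    (congrArg₂ (· - ·) (heqba t ht' q hq) (heqb t ht' q hq))
  beta_reduce at e₁ e₂ e₃
  linarith [sq_nonneg (ua t q - u t q - Ru t q), sq_nonneg (wa t q - w t q - Rw t q),
    sq_nonneg (ba t q - b t q - Rb t q)]
end
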